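/- Let n ≥ 1, d ≥ 4 and 1 ≤ k ≤ d/2 − 1. There exists a nonempty Zariski-open subset U of R_d = ℂ[x_0,…,x_n]_d such that for all f, g ∈ U: if the k-th order Milnor algebras M^k(f) and M^k(g) are isomorphic as graded ℂ-algebras, then the hypersurfaces V(f) and V(g) are projectively equivalent, i.e., there exist φ ∈ GL_{n+1}(ℂ) and c ∈ ℂ∖{0} such that g = c·(f ∘ φ). -/

import Mathlib

/-!
Let `S = ℂ[y_0,…,y_n]` act on `R` by constant-coefficient differential operators. The open set `U`
is given by the nonvanishing of one maximal minor of the catalecticant matrix, which forces the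
partial derivatives of order `k + 1` to be linearly independent (`partialsIndep_of_det`). The minor
is not identically zero: `β! f_β` may be prescribed to be the moments of a finite set of points with
positive real coordinates, and then the minor is a Gram determinant (`exists_det_ne_zero`; this uses
`2(k + 1) ≤ d`).

A graded isomorphism `M^k(f) ≅ M^k(g)` is induced in degree one by a matrix `φ`, invertible because
the ideals contain no linear forms, and `φ` carries `J^k(f)` into `J^k(g)`
(`exists_units_linSubst`). By the chain rule all derivatives of `F = f ∘ φ` of order `k` lie in
`J^k(g)`, and by comparing degrees they are linear combinations of the derivatives of `g` of order
`k`.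

It remains to see that `F` is then a multiple of `g` (`eq_C_mul_of_partials`). For `θ ∈ S_{k-1}`
write `y_i θ F = η_i g` with `η_i ∈ S_k`. Symmetry of mixed derivatives gives
`(y_l η_i - y_i η_l) g = 0`, so `y_l η_i = y_i η_l` by independence in order `k + 1`. As there are at
least two variables, `η_i = y_i ζ` with `ζ ∈ S_{k-1}` independent of `i`. Hence `θ F - ζ g` has
vanishing gradient and positive degree, and so is zero. Thus the hypothesis descends from order `k`
to order `k - 1` (`descent_step`), and in order `0` it says `F = c g`.
-/

open MvPolynomial Module

/-- The differential operator `∂^α` on `ℂ[x_0,…,x_{N-1}]` given by a multi-index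
`α : Fin N → ℕ`. -/
noncomputable def pd {N : ℕ} (α : Fin N → ℕ) :
    Module.End ℂ (MvPolynomial (Fin N) ℂ) :=
  (List.ofFn fun i =>
    ((MvPolynomial.pderiv (R := ℂ) i).toLinearMap :
      Module.End ℂ (MvPolynomial (Fin N) ℂ)) ^ (α i)).prod

/-- The `k`-th order Jacobian ideal `J^k(f)`, generated by all partial
derivatives `∂^α f` with `|α| = k`. -/
noncomputable def milnorIdeal {N : ℕ} (f : MvPolynomial (Fin N) ℂ) (k : ℕ) :
    Ideal (MvPolynomial (Fin N) ℂ) :=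
  Ideal.span {g | ∃ α : Fin N → ℕ, (∑ i, α i) = k ∧ g = pd α f}

/-- The degree-`m` graded piece of the quotient `R ⧸ I`, namely the image of the
space of homogeneous polynomials of degree `m`. -/
noncomputable def gradedPiece {N : ℕ} (I : Ideal (MvPolynomial (Fin N) ℂ)) (m : ℕ) :
    Submodule ℂ (MvPolynomial (Fin N) ℂ ⧸ I) :=
  Submodule.map (Ideal.Quotient.mkₐ ℂ I).toLinearMap (homogeneousSubmodule (Fin N) ℂ m)

/-- Linear substitution: `linSubst M f = f ∘ M`, i.e. `(linSubst M f)(x) = f(Mx)`. -/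
noncomputable def linSubst {N : ℕ} (M : Matrix (Fin N) (Fin N) ℂ)
    (f : MvPolynomial (Fin N) ℂ) : MvPolynomial (Fin N) ℂ :=
  aeval (fun j => ∑ l, MvPolynomial.C (M j l) * X l) f

/-! ### Constant-coefficient differential operators -/

theorem isHom_iff {N m : ℕ} {p : MvPolynomial (Fin N) ℂ} :
    p.IsHomogeneous m ↔ ∀ β, coeff β p ≠ 0 → β.degree = m := by
  simp only [IsHomogeneous, IsWeightedHomogeneous, Finsupp.degree_eq_weight_one]
  rfl

theorem pderiv_commute {N : ℕ} (i j : Fin N) :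
    Commute ((pderiv (R := ℂ) i).toLinearMap : Module.End ℂ (MvPolynomial (Fin N) ℂ))
      (pderiv (R := ℂ) j).toLinearMap := by
  refine LinearMap.ext fun p => ?_
  ext m
  rcases eq_or_ne i j with rfl | h
  · rfl
  · simp [coeff_pderiv, h, h.symm, add_right_comm]
    ring

open scoped IsMulCommutative in
/-- The action of `ℂ[y_0,…,y_{N-1}]` on `ℂ[x_0,…,x_{N-1}]` by constant-coefficient differential
operators, `y_i` acting as `∂/∂x_i`. It is built through the subalgebra of endomorphisms generated
by the partial derivatives, since `aeval` needs a commutative target. -/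
noncomputable def diffOp (N : ℕ) :
    MvPolynomial (Fin N) ℂ →ₐ[ℂ] Module.End ℂ (MvPolynomial (Fin N) ℂ) :=
  haveI : IsMulCommutative (Algebra.adjoin ℂ (Set.range fun i : Fin N =>
      ((pderiv (R := ℂ) i).toLinearMap : Module.End ℂ (MvPolynomial (Fin N) ℂ)))) :=
    Algebra.isMulCommutative_adjoin ℂ (by
      rintro _ ⟨i, rfl⟩ _ ⟨j, rfl⟩; exact pderiv_commute i j)
  (Algebra.adjoin ℂ (Set.range fun i : Fin N =>
      ((pderiv (R := ℂ) i).toLinearMap : Module.End ℂ (MvPolynomial (Fin N) ℂ)))).val.comp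
    (aeval (R := ℂ) (S₁ := Algebra.adjoin ℂ (Set.range fun i : Fin N =>
      ((pderiv (R := ℂ) i).toLinearMap : Module.End ℂ (MvPolynomial (Fin N) ℂ))))
      fun i => ⟨_, Algebra.subset_adjoin ⟨i, rfl⟩⟩)

theorem diffOp_X {N : ℕ} (i : Fin N) : diffOp N (X i) = (pderiv (R := ℂ) i).toLinearMap := by
  simp [diffOp]

theorem diffOp_X_mul {N : ℕ} (i : Fin N) (θ f : MvPolynomial (Fin N) ℂ) :
    diffOp N (X i * θ) f = pderiv i (diffOp N θ f) := by
  rw [map_mul, diffOp_X]; rfl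

theorem pd_eq_diffOp {N : ℕ} (α : Fin N →₀ ℕ) : pd α = diffOp N (monomial α 1) := by
  have h : (monomial α 1 : MvPolynomial (Fin N) ℂ) = (List.ofFn fun i => X i ^ α i).prod := by
    rw [List.prod_ofFn, monomial_eq, map_one, one_mul, Finsupp.prod_fintype _ _ (by simp)]
  rw [h, map_list_prod, List.map_ofFn, pd]
  congr 2
  funext i
  simp [diffOp_X]

/-- The multi-index factorial `β! = ∏ β_i!`. -/
noncomputable def mfact {N : ℕ} (β : Fin N →₀ ℕ) : ℂ := ∏ i, ((β i).factorial : ℂ)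

theorem mfact_ne_zero {N : ℕ} (β : Fin N →₀ ℕ) : mfact β ≠ 0 :=
  Finset.prod_ne_zero_iff.mpr fun i _ => by exact_mod_cast (β i).factorial_ne_zero

theorem mfact_add_single {N : ℕ} (β : Fin N →₀ ℕ) (i : Fin N) :
    mfact (β + Finsupp.single i 1) = (β i + 1) * mfact β := by
  classical
  unfold mfact
  rw [← Finset.mul_prod_erase _ _ (Finset.mem_univ i),
    ← Finset.mul_prod_erase _ (fun i => ((β i).factorial : ℂ)) (Finset.mem_univ i), ← mul_assoc]
  congr 1
  · simp [Nat.factorial_succ]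
  · refine Finset.prod_congr rfl fun j hj => ?_
    simp [(Finset.ne_of_mem_erase hj).symm]

/-- With coefficients normalised by factorials, `∂^α` is a shift by `α`. -/
theorem coeff_diffOp_monomial {N : ℕ} (f : MvPolynomial (Fin N) ℂ) (α γ : Fin N →₀ ℕ) :
    mfact γ * coeff γ (diffOp N (monomial α 1) f) = mfact (α + γ) * coeff (α + γ) f := by
  classical
  induction α using Finsupp.induction_linear generalizing f γ with
  | zero => simp
  | add a b ha hb =>
    have : (monomial (a + b) 1 : MvPolynomial (Fin N) ℂ) = monomial b 1 * monomial a 1 := by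
      simp [monomial_mul, add_comm]
    rw [this, map_mul, Module.End.mul_apply, hb, ha, add_assoc]
  | single i m =>
    induction m generalizing γ with
    | zero => simp
    | succ m ih =>
      have : (monomial (Finsupp.single i (m + 1)) 1 : MvPolynomial (Fin N) ℂ)
          = X i * monomial (Finsupp.single i m) 1 := by
        simp [X, monomial_mul, add_comm]
      have h2 : Finsupp.single i (m + 1) + γ = Finsupp.single i m + (γ + Finsupp.single i 1) := by
        rw [Finsupp.single_add]; abel
      rw [this, diffOp_X_mul, coeff_pderiv, h2, ← ih, mfact_add_single]
      ring

theorem isHomogeneous_diffOp {N j d : ℕ} {θ f : MvPolynomial (Fin N) ℂ}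
    (hθ : θ.IsHomogeneous j) (hf : f.IsHomogeneous (j + d)) : (diffOp N θ f).IsHomogeneous d := by
  rw [← mem_homogeneousSubmodule, θ.as_sum, map_sum, LinearMap.sum_apply]
  refine Submodule.sum_mem _ fun α hα => ?_
  have hdeg := isHom_iff.mp hθ α (mem_support_iff.mp hα)
  have : (monomial α (coeff α θ) : MvPolynomial (Fin N) ℂ) = coeff α θ • monomial α 1 := by
    simp [smul_monomial]
  rw [this, map_smul, LinearMap.smul_apply]
  refine Submodule.smul_mem _ _ (isHom_iff.mpr fun γ hγ => ?_)
  have h := coeff_diffOp_monomial f α γ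
  have h3 : coeff (α + γ) f ≠ 0 := by
    intro h0
    rw [h0, mul_zero] at h
    exact (mul_ne_zero (mfact_ne_zero γ) hγ) h
  have := isHom_iff.mp hf _ h3
  rw [map_add] at this
  omega

theorem eq_zero_of_pderiv_eq_zero {N d : ℕ} {h : MvPolynomial (Fin N) ℂ}
    (hh : h.IsHomogeneous (d + 1)) (h0 : ∀ i, pderiv i h = 0) : h = 0 := by
  classical
  ext β
  by_contra hβ
  have hdeg := isHom_iff.mp hh β hβ
  have : ∃ i, β i ≠ 0 := by
    by_contra! hc
    have : β = 0 := Finsupp.ext hc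
    simp [this] at hdeg
  obtain ⟨i, hi⟩ := this
  have h1 := congrArg (coeff (β - Finsupp.single i 1)) (h0 i)
  have hle : Finsupp.single i 1 ≤ β := by
    simpa [Finsupp.single_le_iff] using Nat.one_le_iff_ne_zero.mpr hi
  rw [coeff_pderiv, tsub_add_cancel_of_le hle, coeff_zero] at h1
  rcases mul_eq_zero.mp h1 with h2 | h2
  · exact hβ h2
  · exact (Nat.cast_add_one_ne_zero _) h2

theorem isHomogeneous_of_X_mul {N j : ℕ} {i : Fin N} {ζ : MvPolynomial (Fin N) ℂ}
    (h : (X i * ζ).IsHomogeneous (j + 1)) : ζ.IsHomogeneous j := by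
  refine isHom_iff.mpr fun β hβ => ?_
  have := isHom_iff.mp h (Finsupp.single i 1 + β) (by rwa [coeff_X_mul])
  rw [map_add, Finsupp.degree_single] at this
  omega

/-! ### Forms with independent partial derivatives -/

/-- No nonzero homogeneous operator of degree `m` annihilates `g`; equivalently, the partial
derivatives of `g` of order `m` are linearly independent. -/
def PartialsIndep {N : ℕ} (g : MvPolynomial (Fin N) ℂ) (m : ℕ) : Prop :=
  ∀ θ : MvPolynomial (Fin N) ℂ, θ.IsHomogeneous m → diffOp N θ g = 0 → θ = 0

theorem PartialsIndep.of_succ {n m : ℕ} {g : MvPolynomial (Fin (n + 1)) ℂ}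
    (h : PartialsIndep g (m + 1)) : PartialsIndep g m := by
  intro θ hθ h0
  have h1 : X 0 * θ = 0 := h _ (by
    rw [add_comm m 1]; exact (isHomogeneous_X _ _).mul hθ) (by rw [diffOp_X_mul, h0, map_zero])
  exact (mul_eq_zero.mp h1).resolve_left (X_ne_zero _)

/-- Descent step: if every partial derivative of `F` of order `j + 1` is a constant-coefficient
derivative of `G` of the same order, then the same holds in order `j`. The operators `η i`
representing `∂_i θ F` satisfy `y_l η_i = y_i η_l` by independence, so they have the form `y_i ζ`
with a common `ζ`, and `θ F - ζ G` has vanishing gradient. -/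
theorem descent_step {n d j : ℕ} (hn : 1 ≤ n) {F G : MvPolynomial (Fin (n + 1)) ℂ}
    (hF : F.IsHomogeneous d) (hG : G.IsHomogeneous d) (hjd : j < d)
    (hind : PartialsIndep G (j + 2))
    (H : ∀ θ : MvPolynomial (Fin (n + 1)) ℂ, θ.IsHomogeneous (j + 1) →
      ∃ η : MvPolynomial (Fin (n + 1)) ℂ, η.IsHomogeneous (j + 1) ∧
        diffOp _ θ F = diffOp _ η G)
    (θ : MvPolynomial (Fin (n + 1)) ℂ) (hθ : θ.IsHomogeneous j) :
    ∃ η : MvPolynomial (Fin (n + 1)) ℂ, η.IsHomogeneous j ∧ diffOp _ θ F = diffOp _ η G := by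
  have hX : ∀ i, (X i * θ).IsHomogeneous (j + 1) := fun i => by
    rw [add_comm j 1]; exact (isHomogeneous_X _ _).mul hθ
  choose η hη hηF using fun i => H (X i * θ) (hX i)
  have hcross : ∀ i l, X l * η i = X i * η l := by
    intro i l
    rw [← sub_eq_zero]
    refine hind _ ?_ ?_
    · rw [show j + 2 = 1 + (j + 1) by ring]
      exact ((isHomogeneous_X _ _).mul (hη i)).sub ((isHomogeneous_X _ _).mul (hη l))
    · rw [map_sub, LinearMap.sub_apply, diffOp_X_mul, diffOp_X_mul, ← hηF, ← hηF,
        ← diffOp_X_mul, ← diffOp_X_mul, mul_left_comm, sub_self]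
  have hdvd : (X 0 : MvPolynomial (Fin (n + 1)) ℂ) ∣ η 0 := by
    have h01 : (0 : Fin (n + 1)) ≠ Fin.last n := by
      intro h; have := congrArg Fin.val h; simp at this; omega
    have h1 : (X 0 : MvPolynomial (Fin (n + 1)) ℂ) ∣ X (Fin.last n) * η 0 :=
      ⟨_, hcross 0 (Fin.last n)⟩
    exact (X_dvd_mul_iff.mp h1).resolve_left fun h => h01 (X_dvd_X.mp h)
  obtain ⟨ζ, hζ⟩ := hdvd
  have hall : ∀ i, η i = X i * ζ := by
    intro i
    have h1 := hcross 0 i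
    rw [hζ, mul_left_comm] at h1
    exact (mul_left_cancel₀ (X_ne_zero _) h1).symm
  have hζj : ζ.IsHomogeneous j := isHomogeneous_of_X_mul (hζ ▸ hη 0)
  refine ⟨ζ, hζj, ?_⟩
  obtain ⟨e, rfl⟩ := Nat.exists_eq_add_of_lt hjd
  rw [← sub_eq_zero]
  refine eq_zero_of_pderiv_eq_zero (d := e) ((isHomogeneous_diffOp hθ hF).sub
    (isHomogeneous_diffOp hζj hG)) fun i => ?_
  rw [map_sub, ← diffOp_X_mul, ← diffOp_X_mul, hηF, hall, sub_self]

/-- If the derivatives of `G` of order `k + 1` are independent and all derivatives of `F` of order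
`k` lie in the span of those of `G`, then `F` is a multiple of `G`. -/
theorem eq_C_mul_of_partials {n d k : ℕ} (hn : 1 ≤ n) {F G : MvPolynomial (Fin (n + 1)) ℂ}
    (hF : F.IsHomogeneous d) (hG : G.IsHomogeneous d) (hkd : k ≤ d)
    (hind : PartialsIndep G (k + 1))
    (H : ∀ θ : MvPolynomial (Fin (n + 1)) ℂ, θ.IsHomogeneous k →
      ∃ η : MvPolynomial (Fin (n + 1)) ℂ, η.IsHomogeneous k ∧ diffOp _ θ F = diffOp _ η G) :
    ∃ c : ℂ, F = C c * G := by
  induction k with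
  | zero =>
    obtain ⟨η, hη, h⟩ := H 1 (isHomogeneous_one _ _)
    have hC : η = algebraMap ℂ _ (coeff 0 η) := by
      rw [algebraMap_eq, ← homogeneousComponent_zero, homogeneousComponent_eq_self hη]
    refine ⟨coeff 0 η, ?_⟩
    rw [hC, AlgHom.commutes, map_one] at h
    simpa [Module.algebraMap_end_apply, C_mul'] using h
  | succ k ih =>
    exact ih (by omega) hind.of_succ (descent_step hn hF hG (by omega) hind H)

/-! ### Linear substitutions and graded isomorphisms -/

/-- Chain rule for first derivatives of a linear substitution. -/
theorem pderiv_linSubst {N : ℕ} (M : Matrix (Fin N) (Fin N) ℂ) (l : Fin N)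
    (f : MvPolynomial (Fin N) ℂ) :
    pderiv l (linSubst M f) = ∑ j, C (M j l) * linSubst M (pderiv j f) := by
  classical
  unfold linSubst
  induction f using MvPolynomial.induction_on with
  | C a => simp
  | add p q hp hq => simp only [map_add, hp, hq, mul_add, Finset.sum_add_distrib]
  | mul_X p i hp =>
    have h1 : pderiv l (∑ m, C (M i m) * X m : MvPolynomial (Fin N) ℂ) = C (M i l) := by
      simp [pderiv_X, Pi.single_apply]
    have h2 : ∀ j, pderiv j (p * X i) = pderiv j p * X i + p * if j = i then 1 else 0 := by
      intro j
      rw [pderiv_mul, pderiv_X, Pi.single_apply]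
      simp [eq_comm]
    rw [map_mul, aeval_X, pderiv_mul, hp, h1]
    simp only [h2, map_add, map_mul, aeval_X, mul_add, Finset.sum_add_distrib, Finset.sum_mul]
    congr 1
    · exact Finset.sum_congr rfl fun j _ => by ring
    · simp [mul_comm]

/-- Chain rule: operators pass through a linear substitution via the transposed substitution. -/
theorem diffOp_linSubst {N : ℕ} (M : Matrix (Fin N) (Fin N) ℂ) (θ f : MvPolynomial (Fin N) ℂ) :
    diffOp N θ (linSubst M f) = linSubst M (diffOp N (linSubst M.transpose θ) f) := by
  induction θ using MvPolynomial.induction_on generalizing f with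
  | C a =>
    have : linSubst M.transpose (C a) = C a := by simp [linSubst]
    rw [this, ← algebraMap_eq, AlgHom.commutes]
    simp [Module.algebraMap_end_apply, linSubst]
  | add p q hp hq =>
    have : linSubst M.transpose (p + q) = linSubst M.transpose p + linSubst M.transpose q := by
      simp [linSubst]
    rw [this, map_add, map_add, LinearMap.add_apply, LinearMap.add_apply, hp, hq]
    simp [linSubst]
  | mul_X p i hp =>
    have : linSubst M.transpose (p * X i)
        = ∑ j, C (M j i) * (X j * linSubst M.transpose p) := by
      simp only [linSubst, map_mul, aeval_X, Finset.mul_sum, Matrix.transpose_apply]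
      exact Finset.sum_congr rfl fun j _ => by ring
    have hs : linSubst M (∑ j, M j i • pderiv j (diffOp N (linSubst M.transpose p) f))
        = ∑ j, C (M j i) * linSubst M (pderiv j (diffOp N (linSubst M.transpose p) f)) := by
      simp [linSubst, C_mul']
    rw [this, mul_comm, diffOp_X_mul, hp, pderiv_linSubst, ← hs]
    simp only [C_mul', map_sum, map_smul, LinearMap.sum_apply, LinearMap.smul_apply, diffOp_X_mul]

theorem isHomogeneous_linSubst {N m : ℕ} (M : Matrix (Fin N) (Fin N) ℂ)
    {f : MvPolynomial (Fin N) ℂ} (hf : f.IsHomogeneous m) : (linSubst M f).IsHomogeneous m := by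
  have := hf.aeval (S := ℂ) (fun j => ∑ l, C (M j l) * (X l : MvPolynomial (Fin N) ℂ)) (n := 1)
    (fun j => IsHomogeneous.sum _ _ _ fun l _ => isHomogeneous_C_mul_X _ _)
  rwa [one_mul] at this

theorem diffOp_mem_milnorIdeal {N k : ℕ} {θ : MvPolynomial (Fin N) ℂ} (hθ : θ.IsHomogeneous k)
    (f : MvPolynomial (Fin N) ℂ) : diffOp N θ f ∈ milnorIdeal f k := by
  rw [θ.as_sum, map_sum, LinearMap.sum_apply]
  refine Submodule.sum_mem _ fun α hα => ?_
  have hdeg := isHom_iff.mp hθ α (mem_support_iff.mp hα)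
  have : (monomial α (coeff α θ) : MvPolynomial (Fin N) ℂ) = coeff α θ • monomial α 1 := by
    simp [smul_monomial]
  rw [this, map_smul, LinearMap.smul_apply, ← C_mul', ← pd_eq_diffOp]
  exact Ideal.mul_mem_left _ _ (Ideal.subset_span
    ⟨α, by rw [← hdeg, Finsupp.degree_eq_sum], rfl⟩)

/-- Up to degree `e = deg g - k`, an element of `J^k(g)` agrees with a linear combination of the
generators, since these are homogeneous of degree `e`. -/
theorem exists_of_mem_milnorIdeal {N k e : ℕ} {g : MvPolynomial (Fin N) ℂ}
    (hg : g.IsHomogeneous (k + e)) {q : MvPolynomial (Fin N) ℂ} (hq : q ∈ milnorIdeal g k) :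
    ∃ η : MvPolynomial (Fin N) ℂ, η.IsHomogeneous k ∧
      ∀ γ : Fin N →₀ ℕ, γ.degree ≤ e → coeff γ q = coeff γ (diffOp N η g) := by
  classical
  induction hq using Submodule.span_induction with
  | mem x hx =>
    obtain ⟨α, hα, rfl⟩ := hx
    have h := pd_eq_diffOp (Finsupp.equivFunOnFinite.symm α)
    rw [Finsupp.coe_equivFunOnFinite_symm] at h
    refine ⟨monomial (Finsupp.equivFunOnFinite.symm α) 1, isHomogeneous_monomial _ ?_, ?_⟩
    · rw [Finsupp.degree_eq_sum]; exact hα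
    · intro γ _; rw [h]
  | zero => exact ⟨0, isHomogeneous_zero _ _ _, by simp⟩
  | add x y _ _ hx hy =>
    obtain ⟨η, h1, h2⟩ := hx
    obtain ⟨ζ, h3, h4⟩ := hy
    exact ⟨η + ζ, h1.add h3, fun γ hγ => by simp [h2 γ hγ, h4 γ hγ]⟩
  | smul a x _ hx =>
    obtain ⟨η, h1, h2⟩ := hx
    refine ⟨C (coeff 0 a) * η, h1.C_mul _, fun γ hγ => ?_⟩
    rw [smul_eq_mul, coeff_mul, C_mul', map_smul, LinearMap.smul_apply, coeff_smul,
      Finset.sum_eq_single (0, γ)]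
    · simp [h2 γ hγ]
    · rintro ⟨u, v⟩ huv hne
      rw [Finset.HasAntidiagonal.mem_antidiagonal] at huv
      have hdeg : u.degree + v.degree = γ.degree := by rw [← map_add, huv]
      have hu : u.degree ≠ 0 := by
        intro h0
        rw [Finsupp.degree_eq_zero_iff] at h0
        subst h0
        simp at huv
        exact hne (by rw [huv])
      simp only
      rw [h2 v (by omega), (isHomogeneous_diffOp h1 hg).coeff_eq_zero (by omega), mul_zero]
    · intro h; simp at h

/-- A homomorphism between quotients that carries degree one into degree one is induced by a
linear substitution. -/
theorem exists_linSubst {N : ℕ} {I J : Ideal (MvPolynomial (Fin N) ℂ)}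
    (e : (MvPolynomial (Fin N) ℂ ⧸ I) →ₐ[ℂ] (MvPolynomial (Fin N) ℂ ⧸ J))
    (he : ∀ x ∈ gradedPiece I 1, e x ∈ gradedPiece J 1) :
    ∃ M : Matrix (Fin N) (Fin N) ℂ, ∀ p : MvPolynomial (Fin N) ℂ,
      e (Ideal.Quotient.mkₐ ℂ I p) = Ideal.Quotient.mkₐ ℂ J (linSubst M p) := by
  have h1 : ∀ j : Fin N, ∃ c : Fin N → ℂ, e (Ideal.Quotient.mkₐ ℂ I (X j))
      = Ideal.Quotient.mkₐ ℂ J (∑ l, C (c l) * X l) := by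
    intro j
    obtain ⟨ℓ, hℓ, hℓ'⟩ := he (Ideal.Quotient.mkₐ ℂ I (X j)) ⟨X j, isHomogeneous_X _ _, rfl⟩
    have hℓs : ℓ ∈ homogeneousSubmodule (Fin N) ℂ 1 := hℓ
    rw [homogeneousSubmodule_one_eq_span_X, Submodule.mem_span_range_iff_exists_fun] at hℓs
    obtain ⟨c, rfl⟩ := hℓs
    refine ⟨c, ?_⟩
    rw [← hℓ']
    simp [C_mul']
  choose M hM using h1
  refine ⟨M, fun p => ?_⟩
  have : e.comp (Ideal.Quotient.mkₐ ℂ I) = (Ideal.Quotient.mkₐ ℂ J).comp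
      (aeval fun j => ∑ l, C (M j l) * X l) := by
    refine MvPolynomial.algHom_ext fun j => ?_
    rw [AlgHom.comp_apply, AlgHom.comp_apply, aeval_X]
    exact hM j
  exact DFunLike.congr_fun this p

theorem linSubst_linSubst_X {N : ℕ} (M M' : Matrix (Fin N) (Fin N) ℂ) (j : Fin N) :
    linSubst M' (linSubst M (X j)) = ∑ l, C ((M * M') j l) * X l := by
  simp only [linSubst, aeval_X, map_sum, map_mul, aeval_C, algebraMap_eq, Matrix.mul_apply,
    Finset.mul_sum, Finset.sum_mul]
  rw [Finset.sum_comm]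
  exact Finset.sum_congr rfl fun l _ => Finset.sum_congr rfl fun m _ => by ring

theorem eq_zero_of_linSubst_eq_zero {N : ℕ} {M M' : Matrix (Fin N) (Fin N) ℂ} (h : M * M' = 1)
    {f : MvPolynomial (Fin N) ℂ} (hf : linSubst M f = 0) : f = 0 := by
  have hcomp : (aeval fun j => ∑ l, C (M' j l) * X l).comp (aeval fun j => ∑ l, C (M j l) * X l)
      = AlgHom.id ℂ (MvPolynomial (Fin N) ℂ) := by
    refine MvPolynomial.algHom_ext fun j => ?_
    rw [AlgHom.comp_apply]
    have h1 := linSubst_linSubst_X M M' j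
    unfold linSubst at h1
    rw [h1, h]
    simp [Matrix.one_apply]
  have h2 := DFunLike.congr_fun hcomp f
  rw [AlgHom.comp_apply] at h2
  unfold linSubst at hf
  rw [hf, map_zero] at h2
  exact h2.symm

/-- A graded isomorphism of Milnor algebras is induced by an invertible linear substitution: the
ideals contain no linear forms. -/
theorem exists_units_linSubst {N k e : ℕ} (he : 1 < e) {f g : MvPolynomial (Fin N) ℂ}
    (hf : f.IsHomogeneous (k + e))
    (E : (MvPolynomial (Fin N) ℂ ⧸ milnorIdeal f k) ≃ₐ[ℂ] (MvPolynomial (Fin N) ℂ ⧸ milnorIdeal g k))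
    (hE : ∀ m : ℕ, Submodule.map (E.toLinearEquiv : _ →ₗ[ℂ] _)
      (gradedPiece (milnorIdeal f k) m) = gradedPiece (milnorIdeal g k) m) :
    ∃ φ : (Matrix (Fin N) (Fin N) ℂ)ˣ, ∀ p ∈ milnorIdeal f k,
      linSubst (φ : Matrix (Fin N) (Fin N) ℂ) p ∈ milnorIdeal g k := by
  classical
  obtain ⟨M, hM⟩ := exists_linSubst E.toAlgHom (fun x hx => by
    rw [← hE 1]; exact ⟨x, hx, rfl⟩)
  obtain ⟨M', hM'⟩ := exists_linSubst E.symm.toAlgHom (fun x hx => by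
    rw [← hE 1] at hx
    obtain ⟨y, hy, rfl⟩ := hx
    simpa using hy)
  have hMM : M * M' = 1 := by
    ext j l
    have h1 := hM' (linSubst M (X j))
    rw [← hM] at h1
    have h2 : Ideal.Quotient.mkₐ ℂ (milnorIdeal f k) (X j)
        = Ideal.Quotient.mkₐ ℂ (milnorIdeal f k) (linSubst M' (linSubst M (X j))) := by
      rw [← h1]; simp
    have h3 : X j - linSubst M' (linSubst M (X j)) ∈ milnorIdeal f k := by
      rw [Ideal.Quotient.mkₐ_eq_mk] at h2
      exact Ideal.Quotient.eq.mp h2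
    obtain ⟨η, hη, hc⟩ := exists_of_mem_milnorIdeal hf h3
    have h4 := hc (Finsupp.single l 1) (by simp; omega)
    rw [(isHomogeneous_diffOp hη hf).coeff_eq_zero (by simp; omega), linSubst_linSubst_X,
      coeff_sub, coeff_sum, sub_eq_zero] at h4
    simp only [coeff_C_mul, coeff_X, Finsupp.single_left_inj (one_ne_zero : (1 : ℕ) ≠ 0)] at h4
    rw [Matrix.one_apply, h4]
    simp
  refine ⟨⟨M, M', hMM, mul_eq_one_comm.mp hMM⟩, fun p hp => ?_⟩
  have h1 := hM p
  rw [Ideal.Quotient.mkₐ_eq_mk, Ideal.Quotient.mkₐ_eq_mk, Ideal.Quotient.eq_zero_iff_mem.mpr hp,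
    map_zero] at h1
  exact Ideal.Quotient.eq_zero_iff_mem.mp h1.symm

/-! ### The catalecticant minor -/

/-- The multi-indices of total degree `m`. -/
abbrev MIdx (N m : ℕ) : Type := {α : Fin N →₀ ℕ // α ∈ Finset.finsuppAntidiag Finset.univ m}

theorem MIdx.degree {N m : ℕ} (α : MIdx N m) : α.1.degree = m := by
  rw [Finsupp.degree_eq_sum]; exact (Finset.mem_finsuppAntidiag.mp α.2).1

theorem mem_finsuppAntidiag_univ {N m : ℕ} {α : Fin N →₀ ℕ} :
    α ∈ Finset.finsuppAntidiag Finset.univ m ↔ α.degree = m := by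
  simp [Finset.mem_finsuppAntidiag, Finsupp.degree_eq_sum]

/-- A square submatrix of the catalecticant matrix, with entries the normalised coefficients
`β! f_β` at `β = α + α' + r e_0` as polynomials in the coefficients `f_β`. Here `α` and `α'` run
over the multi-indices of degree `m`, so that the entries concern forms of degree `2m + r`. -/
noncomputable def catMatrix (n m r : ℕ) :
    Matrix (MIdx (n + 1) m) (MIdx (n + 1) m) (MvPolynomial (Fin (n + 1) →₀ ℕ) ℂ) :=
  Matrix.of fun α α' => C (mfact (α.1 + (α'.1 + Finsupp.single 0 r))) *
    X (α.1 + (α'.1 + Finsupp.single 0 r))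

theorem sum_coeff_monomial {N m : ℕ} {θ : MvPolynomial (Fin N) ℂ} (hθ : θ.IsHomogeneous m) :
    θ = ∑ α : MIdx N m, coeff α.1 θ • monomial α.1 1 := by
  classical
  ext β
  rw [Finset.sum_coe_sort (Finset.finsuppAntidiag Finset.univ m)
    (fun α => coeff α θ • (monomial α 1 : MvPolynomial (Fin N) ℂ))]
  simp only [coeff_sum, coeff_smul, coeff_monomial, smul_eq_mul, mul_ite, mul_one, mul_zero,
    Finset.sum_ite_eq', mem_finsuppAntidiag_univ]
  split_ifs with h
  · rfl
  · exact hθ.coeff_eq_zero h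

theorem partialsIndep_of_det {n m r : ℕ} {f : MvPolynomial (Fin (n + 1)) ℂ}
    (hdet : eval (fun α => f.coeff α) (catMatrix n m r).det ≠ 0) : PartialsIndep f m := by
  classical
  intro θ hθ h0
  rw [RingHom.map_det] at hdet
  have hv : (fun α : MIdx (n + 1) m => coeff α.1 θ) = 0 := by
    refine Matrix.eq_zero_of_vecMul_eq_zero hdet ?_
    funext α'
    have h1 : diffOp _ θ f = ∑ α : MIdx (n + 1) m, coeff α.1 θ • diffOp _ (monomial α.1 1) f := by
      conv_lhs => rw [sum_coeff_monomial hθ]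
      simp only [map_sum, map_smul, LinearMap.sum_apply, LinearMap.smul_apply]
    rw [h0] at h1
    have h2 := congrArg (fun q => mfact (α'.1 + Finsupp.single 0 r) *
      coeff (α'.1 + Finsupp.single 0 r) q) h1
    simp only [coeff_zero, mul_zero, coeff_sum, coeff_smul, Finset.mul_sum, smul_eq_mul,
      mul_left_comm (mfact _), coeff_diffOp_monomial] at h2
    simpa [Matrix.vecMul, dotProduct, catMatrix] using h2.symm
  rw [sum_coeff_monomial hθ]
  exact Finset.sum_eq_zero fun α _ => by rw [show coeff α.1 θ = 0 from congrFun hv α, zero_smul]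

/-- The monomial `x^β` at the grid point `(p_0 + 1, …, p_n + 1)`. -/
noncomputable def gridMon {n K : ℕ} (p : Fin (n + 1) → Fin K) (β : Fin (n + 1) →₀ ℕ) : ℝ :=
  ∏ i, ((p i : ℕ) + 1 : ℝ) ^ β i

theorem gridMon_add {n K : ℕ} (p : Fin (n + 1) → Fin K) (β γ : Fin (n + 1) →₀ ℕ) :
    gridMon p (β + γ) = gridMon p β * gridMon p γ := by
  simp [gridMon, pow_add, Finset.prod_mul_distrib]

theorem gridMon_pos {n K : ℕ} (p : Fin (n + 1) → Fin K) (β : Fin (n + 1) →₀ ℕ) :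
    0 < gridMon p β :=
  Finset.prod_pos fun i _ => by positivity

/-- A form of degree `m` is determined by its values on a grid with `m + 1` points in each
direction. -/
theorem eq_zero_of_grid {n m : ℕ} (v : MIdx (n + 1) m → ℂ)
    (h : ∀ p : Fin (n + 1) → Fin (m + 1), ∑ α, v α * (gridMon p α.1 : ℂ) = 0) : v = 0 := by
  classical
  set Q : MvPolynomial (Fin (n + 1)) ℂ := ∑ α, monomial α.1 (v α) with hQ
  have hQh : Q.IsHomogeneous m :=
    IsHomogeneous.sum _ _ _ fun α _ => isHomogeneous_monomial _ α.degree
  have hinj : Function.Injective (fun a : Fin (m + 1) => ((a : ℕ) + 1 : ℂ)) := by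
    intro a b hab
    simpa [Fin.ext_iff] using hab
  have hQ0 : Q = 0 := by
    refine eq_zero_of_eval_zero_at_prod_finset Q
      (fun _ => Finset.univ.image fun a : Fin (m + 1) => ((a : ℕ) + 1 : ℂ)) ?_ ?_
    · intro i
      rw [Finset.card_image_of_injective _ hinj, Finset.card_univ, Fintype.card_fin]
      exact Nat.lt_succ_of_le ((degreeOf_le_totalDegree _ _).trans hQh.totalDegree_le)
    · intro x hx
      simp only [Finset.mem_image, Finset.mem_univ, true_and] at hx
      choose p hp using hx
      rw [← h p, hQ, map_sum]
      refine Finset.sum_congr rfl fun α _ => ?_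
      rw [eval_monomial, Finsupp.prod_fintype _ _ (by simp), gridMon]
      push_cast
      simp only [hp]
  funext α
  have h1 := congrArg (coeff α.1) hQ0
  simpa [hQ, coeff_sum, coeff_monomial, Subtype.val_inj] using h1

/-- The Hermitian form of a weighted Gram matrix as a sum of squares. -/
theorem gram_eq_sum_normSq {ι κ : Type*} [Fintype ι] [Fintype κ] (w : ι → ℝ) (a : ι → κ → ℝ)
    (v : κ → ℂ) :
    ((∑ p, w p * Complex.normSq (∑ x, v x * (a p x : ℂ)) : ℝ) : ℂ)
      = ∑ x, star (v x) * ∑ y, (∑ p, ((a p x * (a p y * w p) : ℝ) : ℂ)) * v y := by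
  push_cast
  simp only [Complex.normSq_eq_conj_mul_self, map_sum, map_mul, Complex.conj_ofReal,
    Finset.sum_mul_sum, Complex.star_def]
  simp only [Finset.mul_sum, Finset.sum_mul]
  rw [Finset.sum_comm]
  refine Finset.sum_congr rfl fun x _ => ?_
  rw [Finset.sum_comm]
  exact Finset.sum_congr rfl fun y _ => Finset.sum_congr rfl fun p _ => by ring

/-- A form of degree `2m + r` for which the chosen catalecticant minor does not vanish: its
normalised coefficients are the moments of the counting measure on a grid of points with positive
coordinates, and the minor is the determinant of a Gram matrix. -/
theorem exists_det_ne_zero (n m r : ℕ) : ∃ f₀ : MvPolynomial (Fin (n + 1)) ℂ,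
    f₀.IsHomogeneous (2 * m + r) ∧ eval (fun α => f₀.coeff α) (catMatrix n m r).det ≠ 0 := by
  classical
  let h : (Fin (n + 1) →₀ ℕ) → ℂ := fun β =>
    ∑ p : Fin (n + 1) → Fin (m + 1), (gridMon p β : ℂ)
  let f₀ : MvPolynomial (Fin (n + 1)) ℂ :=
    ∑ β : MIdx (n + 1) (2 * m + r), monomial β.1 (h β.1 / mfact β.1)
  have hcoeff : ∀ β : Fin (n + 1) →₀ ℕ, β.degree = 2 * m + r →
      mfact β * coeff β f₀ = h β := by
    intro β hβ
    have : coeff β f₀ = h β / mfact β := by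
      simp only [f₀, coeff_sum, coeff_monomial]
      rw [Finset.sum_eq_single ⟨β, mem_finsuppAntidiag_univ.mpr hβ⟩]
      · simp
      · intro b _ hb
        rw [if_neg]
        intro h; exact hb (Subtype.ext h)
      · simp
    rw [this, mul_div_cancel₀ _ (mfact_ne_zero β)]
  refine ⟨f₀, IsHomogeneous.sum _ _ _ fun α _ => isHomogeneous_monomial _ α.degree, ?_⟩
  rw [RingHom.map_det]
  intro hdet
  obtain ⟨v, hv0, hv⟩ := Matrix.exists_mulVec_eq_zero_iff.mpr hdet
  refine hv0 (eq_zero_of_grid v ?_)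
  set q : (Fin (n + 1) → Fin (m + 1)) → ℂ := fun p => ∑ α, v α * (gridMon p α.1 : ℂ) with hq
  -- The quadratic form of the Gram matrix at `v` is a weighted sum of the `|q p|²`.
  have hsum : ∑ p, gridMon p (Finsupp.single 0 r) * Complex.normSq (q p) = 0 := by
    have h1 : ∀ α : MIdx (n + 1) m, ∑ α' : MIdx (n + 1) m,
        h (α.1 + (α'.1 + Finsupp.single 0 r)) * v α' = 0 := by
      intro α
      have h2 := congrFun hv α
      simp only [Matrix.mulVec, dotProduct, catMatrix, RingHom.mapMatrix_apply, Matrix.map_apply,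
        Matrix.of_apply, map_mul, eval_C, eval_X, Pi.zero_apply] at h2
      rw [← h2]
      refine Finset.sum_congr rfl fun α' _ => ?_
      rw [hcoeff]
      rw [map_add, map_add, α.degree, α'.degree, Finsupp.degree_single]
      ring
    have h3 : ∑ α : MIdx (n + 1) m, star (v α) * ∑ α' : MIdx (n + 1) m,
        h (α.1 + (α'.1 + Finsupp.single 0 r)) * v α' = 0 :=
      Finset.sum_eq_zero fun α _ => by rw [h1 α, mul_zero]
    have h4 : ((∑ p, gridMon p (Finsupp.single 0 r) * Complex.normSq (q p) : ℝ) : ℂ) = 0 := by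
      rw [← h3]
      simp only [hq, h, gridMon_add]
      exact gram_eq_sum_normSq (fun p => gridMon p (Finsupp.single 0 r))
        (fun p (α : MIdx (n + 1) m) => gridMon p α.1) v
    exact_mod_cast h4
  intro p
  have h5 := (Finset.sum_eq_zero_iff_of_nonneg fun p _ =>
    mul_nonneg (gridMon_pos p _).le (Complex.normSq_nonneg (q p))).mp hsum p (Finset.mem_univ p)
  exact Complex.normSq_eq_zero.mp ((mul_eq_zero.mp h5).resolve_left (gridMon_pos p _).ne')

/-! ### The theorem -/

/-- **Theorem.** For `n ≥ 1`, `d ≥ 4` and `1 ≤ k ≤ d/2 − 1` there is a nonempty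
Zariski-open subset `U` of `R_d` (given by the nonvanishing of a polynomial `P` in the
coefficients, nonzero at some homogeneous `f₀` of degree `d`) such that for all
`f, g ∈ U`: if the `k`-th order Milnor algebras `M^k(f)` and `M^k(g)` are isomorphic as
graded `ℂ`-algebras, then `V(f)` and `V(g)` are projectively equivalent, i.e.
`g = c · (f ∘ φ)` for some `φ ∈ GL_{n+1}(ℂ)` and `c ∈ ℂ∖{0}`. -/
theorem generic_milnor_algebra_determines_hypersurface
    {n d k : ℕ} (hn : 1 ≤ n) (hd : 4 ≤ d) (hk1 : 1 ≤ k) (hk : 2 * (k + 1) ≤ d) :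
    ∃ P : MvPolynomial (Fin (n + 1) →₀ ℕ) ℂ,
      (∃ f₀ : MvPolynomial (Fin (n + 1)) ℂ, f₀.IsHomogeneous d ∧
        eval (fun α => f₀.coeff α) P ≠ 0) ∧
      ∀ f g : MvPolynomial (Fin (n + 1)) ℂ,
        f.IsHomogeneous d → eval (fun α => f.coeff α) P ≠ 0 →
        g.IsHomogeneous d → eval (fun α => g.coeff α) P ≠ 0 →
        (∃ e : (MvPolynomial (Fin (n + 1)) ℂ ⧸ milnorIdeal f k) ≃ₐ[ℂ]
              (MvPolynomial (Fin (n + 1)) ℂ ⧸ milnorIdeal g k),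
          ∀ m : ℕ, Submodule.map (e.toLinearEquiv : _ →ₗ[ℂ] _)
              (gradedPiece (milnorIdeal f k) m) = gradedPiece (milnorIdeal g k) m) →
        ∃ (φ : (Matrix (Fin (n + 1)) (Fin (n + 1)) ℂ)ˣ) (c : ℂ), c ≠ 0 ∧
          g = MvPolynomial.C c * linSubst (φ : Matrix (Fin (n + 1)) (Fin (n + 1)) ℂ) f := by
  obtain ⟨r, hr⟩ := Nat.exists_eq_add_of_le hk
  obtain ⟨f₀, hf₀, hdet₀⟩ := exists_det_ne_zero n (k + 1) r
  refine ⟨(catMatrix n (k + 1) r).det, ⟨f₀, hr ▸ hf₀, hdet₀⟩, ?_⟩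
  rintro f g hf hPf hg hPg ⟨E, hE⟩
  obtain ⟨e, rfl⟩ := Nat.exists_eq_add_of_le (show k ≤ d by omega)
  obtain ⟨φ, hφ⟩ := exists_units_linSubst (by omega) hf E hE
  have hF := isHomogeneous_linSubst (φ : Matrix (Fin (n + 1)) (Fin (n + 1)) ℂ) hf
  obtain ⟨c, hc⟩ := eq_C_mul_of_partials hn hF hg (Nat.le_add_right k e)
    (partialsIndep_of_det hPg) (fun θ hθ => by
      have hmem : diffOp _ θ (linSubst (φ : Matrix (Fin (n + 1)) (Fin (n + 1)) ℂ) f)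
          ∈ milnorIdeal g k := by
        rw [diffOp_linSubst]
        exact hφ _ (diffOp_mem_milnorIdeal (isHomogeneous_linSubst _ hθ) f)
      obtain ⟨η, hη, h⟩ := exists_of_mem_milnorIdeal hg hmem
      refine ⟨η, hη, ?_⟩
      ext γ
      by_cases hγ : γ.degree = e
      · exact h γ hγ.le
      · rw [(isHomogeneous_diffOp hθ hF).coeff_eq_zero hγ,
          (isHomogeneous_diffOp hη hg).coeff_eq_zero hγ])
  have hc0 : c ≠ 0 := by
    rintro rfl
    rw [C_0, zero_mul] at hc
    have hf0 : f = 0 := eq_zero_of_linSubst_eq_zero φ.mul_inv hc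
    have h1 := partialsIndep_of_det hPf (X 0 ^ (k + 1)) (by
      simpa using (isHomogeneous_X ℂ (0 : Fin (n + 1))).pow (k + 1)) (by rw [hf0, map_zero])
    exact pow_ne_zero _ (X_ne_zero _) h1
  refine ⟨φ, c⁻¹, inv_ne_zero hc0, ?_⟩
  rw [hc, ← mul_assoc, ← C_mul, inv_mul_cancel₀ hc0, C_1, one_mul]
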